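/- Let 0 < ρ₀ < 1 and λ₀ > 0. Then there exists a number T₀ = T₀(λ₀, ρ₀) > 0 such that for all t₀ ≥ T₀ and all λ ≥ λ₀, the function e_λ(ρ) = E_ρ(−λ t₀^ρ) is positive and strictly monotonically decreasing with respect to ρ on the interval [ρ₀, 1), and moreover e^{−λ t₀} < E_ρ(−λ t₀^ρ) ≤ E_{ρ₀}(−λ t₀^{ρ₀}) for every ρ ∈ [ρ₀, 1). -/

import Mathlib

open Set Real

/-- The Mittag-Leffler function `E_ρ(z) = ∑_{k=0}^∞ z^k / Γ(ρk + 1)`. -/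
noncomputable def mittagLeffler (ρ z : ℝ) : ℝ := ∑' k : ℕ, z ^ k / Real.Gamma (ρ * k + 1)

/-!
In the coordinate `w = log z`, Hankel's formula for `1 / Γ` and a geometric series represent
`π E_ρ(-x)` as the imaginary part of an integral along a ray `arg z = θ` with `π / 2 < θ < π`. As
`θ < π`, the denominator `z ^ ρ + x` stays away from `0` uniformly in `ρ ∈ (0, 1]`, so that the
endpoint `ρ = 1`, where `E_1 = exp`, is not singular. Splitting off the leading term gives
`l π E_ρ(-l t ^ ρ) = π t ^ (-ρ) / Γ(1 - ρ) - R(ρ)`. By convexity of `Γ`, the function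
`ρ ↦ 1 / Γ(1 - ρ)` decreases at rate at least the Euler-Mascheroni constant `γ`, hence the leading
term at rate at least `π γ t ^ (-ρ)`, whereas `R` is Lipschitz with constant
`O(t ^ (-2 ρ) log t / l)`. For large `t` the leading term wins on all of `[ρ₀, 1]`, and comparison
with `ρ = 1` gives the exponential lower bound and positivity.
-/

open MeasureTheory Filter Topology
open scoped Complex
open Complex (I)

local notation "γ" => eulerMascheroniConstant

section Elementary

lemma exp_mul_le_add {ρ σ τ : ℝ} (hτ : τ ∈ Icc ρ σ) (x : ℝ) :
    rexp (τ * x) ≤ rexp (ρ * x) + rexp (σ * x) := by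
  rcases le_total 0 x with hx | hx
  · have := mul_le_mul_of_nonneg_right hτ.2 hx
    exact (Real.exp_le_exp.2 this).trans (le_add_of_nonneg_left (Real.exp_pos _).le)
  · have := mul_le_mul_of_nonpos_right hτ.1 hx
    exact (Real.exp_le_exp.2 this).trans (le_add_of_nonneg_right (Real.exp_pos _).le)

lemma cos_mul_exp_le_one (v : ℝ) {u : ℝ} (hu : u ≤ 0) : cos v * rexp u ≤ 1 :=
  (mul_le_of_le_one_left (Real.exp_pos u).le (cos_le_one v)).trans (Real.exp_le_one_iff.2 hu)

lemma cos_neg_of_mem_Ioc {θ : ℝ} (hθ : θ ∈ Ioc (π / 2) π) : cos θ < 0 :=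
  cos_neg_of_pi_div_two_lt_of_lt hθ.1 (hθ.2.trans_lt (by linarith [pi_pos]))

lemma sin_pos_of_mem_Ioo {θ : ℝ} (hθ : θ ∈ Ioo (π / 2) π) : 0 < sin θ :=
  sin_pos_of_pos_of_lt_pi (by linarith [hθ.1, pi_pos]) hθ.2

lemma tendsto_one_add_log_mul_rpow_neg {r : ℝ} (hr : 0 < r) :
    Tendsto (fun t => (1 + log t) * t ^ (-r)) atTop (𝓝 0) := by
  have hlog : Tendsto (fun t => log t / t ^ r) atTop (𝓝 0) :=
    (isLittleO_log_rpow_atTop hr).tendsto_div_nhds_zero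
  have h := (tendsto_rpow_neg_atTop hr).add hlog
  rw [add_zero] at h
  refine h.congr' ?_
  filter_upwards [eventually_ge_atTop 0] with t ht
  rw [rpow_neg ht, div_eq_mul_inv]
  ring

end Elementary

section Gamma

-- `1 - γ` is the derivative of `Γ` at `2`, which bounds the slopes of the convex
-- function `Γ` to the left of `2`.
lemma Gamma_sub_Gamma_le {x y : ℝ} (hx : 0 < x) (hxy : x ≤ y) (hy : y ≤ 2) :
    Gamma y - Gamma x ≤ (1 - γ) * (y - x) := by
  rcases hxy.eq_or_lt with rfl | hxy
  · simp
  have hderiv : HasDerivAt Gamma (1 - γ) 2 := by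
    convert hasDerivAt_Gamma_nat 1 using 1 <;> norm_num [harmonic]
    ring
  have hx2 : x < 2 := hxy.trans_le hy
  have hslope : slope Gamma x y ≤ 1 - γ :=
    (convexOn_Gamma.slope_mono hx ⟨hx.trans hxy, hxy.ne'⟩ ⟨mem_Ioi.2 two_pos, hx2.ne'⟩ hy).trans
      (convexOn_Gamma.slope_le_of_hasDerivAt hx (mem_Ioi.2 two_pos) hx2 hderiv)
  rwa [slope_def_field, div_le_iff₀ (sub_pos.2 hxy)] at hslope

lemma Gamma_add_one_le_one {x : ℝ} (hx : x ∈ Icc 0 1) : Gamma (x + 1) ≤ 1 := by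
  have h := convexOn_Gamma.2 (mem_Ioi.2 one_pos) (mem_Ioi.2 two_pos) (sub_nonneg.2 hx.2)
    hx.1 (sub_add_cancel 1 x)
  simpa [show 1 - x + x * 2 = x + 1 by ring] using h

-- `Real.Gamma 0 = 0`, so that `(Gamma 0)⁻¹` is the value at `0` of the entire function `1 / Γ`.
lemma inv_Gamma_eq_mul_inv_Gamma_add_one (x : ℝ) : (Gamma x)⁻¹ = x * (Gamma (x + 1))⁻¹ := by
  rcases eq_or_ne x 0 with rfl | hx
  · simp
  · rw [Gamma_add_one hx, mul_inv, mul_inv_cancel_left₀ hx]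

lemma eulerMascheroni_mul_sub_le_inv_Gamma_sub {x y : ℝ} (hx : 0 ≤ x) (hxy : x ≤ y) (hy : y ≤ 1) :
    γ * (y - x) ≤ (Gamma y)⁻¹ - (Gamma x)⁻¹ := by
  have hγ : 0 < γ := one_half_pos.trans one_half_lt_eulerMascheroniConstant
  have hA : 0 < Gamma (x + 1) := Gamma_pos_of_pos (by linarith)
  have hB : 0 < Gamma (y + 1) := Gamma_pos_of_pos (by linarith)
  have hA1 : Gamma (x + 1) ≤ 1 := Gamma_add_one_le_one ⟨hx, hxy.trans hy⟩
  have hB1 : Gamma (y + 1) ≤ 1 := Gamma_add_one_le_one ⟨hx.trans hxy, hy⟩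
  have hAB : Gamma (y + 1) - Gamma (x + 1) ≤ (1 - γ) * (y - x) := by
    simpa using Gamma_sub_Gamma_le (by linarith) (by linarith : x + 1 ≤ y + 1) (by linarith)
  have hA2 : 1 - Gamma (x + 1) ≤ (1 - γ) * (1 - x) := by
    have h := Gamma_sub_Gamma_le (by linarith) (by linarith : x + 1 ≤ 2) le_rfl
    rw [Gamma_two] at h
    linarith
  rw [inv_Gamma_eq_mul_inv_Gamma_add_one x, inv_Gamma_eq_mul_inv_Gamma_add_one y]
  set A := Gamma (x + 1)
  set B := Gamma (y + 1)
  have hnum : γ * (y - x) ≤ y * A - x * B := by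
    nlinarith [mul_le_mul_of_nonneg_left hAB hx, mul_le_mul_of_nonneg_right hA2 (sub_nonneg.2 hxy)]
  calc γ * (y - x) ≤ (y * A - x * B) / (A * B) := by
        rw [le_div_iff₀ (by positivity)]
        exact (mul_le_of_le_one_right (mul_nonneg hγ.le (sub_nonneg.2 hxy))
          (mul_le_one₀ hA1 hB.le hB1)).trans hnum
    _ = y * B⁻¹ - x * A⁻¹ := by field_simp

end Gamma

section DoubleExponential

lemma integral_exp_smul_comp_exp {E : Type*} [NormedAddCommGroup E] [NormedSpace ℝ E]
    (f : ℝ → E) : ∫ u, rexp u • f (rexp u) = ∫ x in Ioi 0, f x := by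
  have h := integral_image_eq_integral_abs_deriv_smul MeasurableSet.univ
    (fun x _ => (Real.hasDerivAt_exp x).hasDerivWithinAt) Real.exp_injective.injOn f
  simpa [Real.range_exp] using h.symm

lemma integrable_exp_smul_comp_exp_iff {E : Type*} [NormedAddCommGroup E] [NormedSpace ℝ E]
    {f : ℝ → E} : Integrable (fun u => rexp u • f (rexp u)) ↔ IntegrableOn f (Ioi 0) := by
  have h := integrableOn_image_iff_integrableOn_abs_deriv_smul MeasurableSet.univ
    (fun x _ => (Real.hasDerivAt_exp x).hasDerivWithinAt) Real.exp_injective.injOn f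
  simpa [Real.range_exp] using h.symm

lemma exp_mul_exp_add_eq_smul (c α u : ℝ) :
    rexp (c * rexp u + α * u) = rexp u • (rexp u ^ (α - 1) * rexp (c * rexp u)) := by
  rw [← Real.exp_mul, ← Real.exp_add, smul_eq_mul, ← Real.exp_add]
  ring_nf

lemma integral_exp_neg_exp_add {α : ℝ} (hα : 0 < α) :
    ∫ u, rexp (-rexp u + α * u) = Gamma α := by
  simp_rw [← neg_one_mul (rexp _), exp_mul_exp_add_eq_smul]
  rw [integral_exp_smul_comp_exp fun x => x ^ (α - 1) * rexp (-1 * x), Gamma_eq_integral hα]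
  simp_rw [neg_one_mul, mul_comm]

variable {c α : ℝ}

lemma integrable_exp_mul_exp_add (hc : c < 0) (hα : 0 < α) :
    Integrable fun u => rexp (c * rexp u + α * u) := by
  simp_rw [exp_mul_exp_add_eq_smul]
  refine (integrable_exp_smul_comp_exp_iff (f := fun x => x ^ (α - 1) * rexp (c * x))).2 ?_
  simpa using integrableOn_rpow_mul_exp_neg_mul_rpow (by linarith) one_pos (neg_pos.2 hc)

lemma integrableOn_Ioi_exp_mul_exp_add (hc : c < 0) (α a : ℝ) :
    IntegrableOn (fun u => rexp (c * rexp u + α * u)) (Ioi a) := by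
  have hint := ((integrable_exp_mul_exp_add hc (show 0 < |α| + 1 by positivity)).integrableOn
    (s := Ioi a)).mul_const (rexp ((α - (|α| + 1)) * a))
  refine hint.mono' (by fun_prop) ?_
  filter_upwards [ae_restrict_mem measurableSet_Ioi] with u (hu : a < u)
  rw [Real.norm_of_nonneg (Real.exp_pos _).le, ← Real.exp_add]
  refine Real.exp_le_exp.2 ?_
  nlinarith [le_abs_self α]

lemma tendsto_exp_mul_exp_add_atTop (hc : c < 0) (α : ℝ) :
    Tendsto (fun u => rexp (c * rexp u + α * u)) atTop (𝓝 0) := by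
  have h := (tendsto_rpow_mul_exp_neg_mul_atTop_nhds_zero α (-c) (neg_pos.2 hc)).comp
    tendsto_exp_atTop
  refine h.congr fun u => ?_
  rw [Function.comp_apply, ← Real.exp_mul, ← Real.exp_add]
  ring_nf

lemma mul_abs_le_exp_add_exp_neg {α : ℝ} (hα : 0 ≤ α) (u : ℝ) :
    α * |u| ≤ rexp (α * u) + rexp (-(α * u)) := by
  rw [← abs_of_nonneg hα, ← abs_mul, abs_of_nonneg hα]
  exact abs_le'.2 ⟨by linarith [add_one_le_exp (α * u), Real.exp_pos (-(α * u))],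
    by linarith [add_one_le_exp (-(α * u)), Real.exp_pos (α * u)]⟩

lemma integrable_abs_mul_exp_mul_exp_add (hc : c < 0) (hα : 0 < α) :
    Integrable fun u => |u| * rexp (c * rexp u + α * u) := by
  have hint := ((integrable_exp_mul_exp_add hc (show 0 < α + α / 2 by positivity)).add
    (integrable_exp_mul_exp_add hc (show 0 < α - α / 2 by linarith))).const_mul (α / 2)⁻¹
  refine hint.mono' (Continuous.aestronglyMeasurable (by fun_prop)) (.of_forall fun u => ?_)
  rw [Real.norm_of_nonneg (by positivity), ← div_eq_inv_mul, le_div_iff₀' (by positivity)]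
  calc α / 2 * (|u| * rexp (c * rexp u + α * u))
      = α / 2 * |u| * rexp (c * rexp u + α * u) := by ring
    _ ≤ (rexp (α / 2 * u) + rexp (-(α / 2 * u))) * rexp (c * rexp u + α * u) := by
        gcongr
        exact mul_abs_le_exp_add_exp_neg (by positivity) u
    _ = _ := by
        rw [add_mul, ← Real.exp_add, ← Real.exp_add]
        simp only [Pi.add_apply]
        ring_nf

lemma integrable_abs_add_mul_exp_mul_exp_add (hc : c < 0) (hα : 0 < α) (b : ℝ) :
    Integrable fun u => (|u| + b) * rexp (c * rexp u + α * u) := by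
  simp_rw [add_mul]
  exact (integrable_abs_mul_exp_mul_exp_add hc hα).add
    ((integrable_exp_mul_exp_add hc hα).const_mul b)

end DoubleExponential

/-- In the logarithmic coordinate `w = log z`, the upper half of Hankel's contour: the segment from
`a` to `a + iθ` followed by the horizontal ray from `a + iθ` to `∞ + iθ`. For `g` real on the real
axis, `(hankelIntegral θ g a).im / π` is the integral of `(2πi)⁻¹ g (log z) / z` over the whole
contour. -/
noncomputable def hankelIntegral (θ : ℝ) (g : ℂ → ℂ) (a : ℝ) : ℂ :=
  I * (∫ v in (0 : ℝ)..θ, g (a + v * I)) + ∫ u in Ioi a, g (u + θ * I)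

section HankelIntegral

variable {θ θ' a b : ℝ} {f g : ℂ → ℂ}

lemma hankelIntegral_const_mul (c : ℂ) :
    hankelIntegral θ (fun w => c * g w) a = c * hankelIntegral θ g a := by
  simp only [hankelIntegral, intervalIntegral.integral_const_mul, integral_const_mul]
  ring

lemma hankelIntegral_sub (hf : Continuous f) (hg : Continuous g)
    (hf' : IntegrableOn (fun u : ℝ => f (u + θ * I)) (Ioi a))
    (hg' : IntegrableOn (fun u : ℝ => g (u + θ * I)) (Ioi a)) :
    hankelIntegral θ (fun w => f w - g w) a = hankelIntegral θ f a - hankelIntegral θ g a := by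
  unfold hankelIntegral
  rw [intervalIntegral.integral_sub (Continuous.intervalIntegrable (by fun_prop) _ _)
    (Continuous.intervalIntegrable (by fun_prop) _ _), integral_sub hf' hg']
  ring

lemma hankelIntegral_of_hasDerivAt (hderiv : ∀ w, HasDerivAt f (g w) w) (hg : Continuous g)
    (hg' : IntegrableOn (fun u : ℝ => g (u + θ * I)) (Ioi a))
    (hlim : Tendsto (fun u : ℝ => f (u + θ * I)) atTop (𝓝 0)) :
    hankelIntegral θ g a = -f a := by
  have hsegment : ∫ v in (0 : ℝ)..θ, g (a + v * I) * I = f (a + θ * I) - f (a + (0 : ℝ) * I) := by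
    refine intervalIntegral.integral_eq_sub_of_hasDerivAt (f := fun v : ℝ => f (a + v * I))
      (fun v _ => (hderiv _).comp v ?_) (Continuous.intervalIntegrable (by fun_prop) _ _)
    simpa using (Complex.ofRealCLM.hasDerivAt.mul_const I).const_add (a : ℂ)
  have hray : ∫ u in Ioi a, g (u + θ * I) = 0 - f (a + θ * I) := by
    refine integral_Ioi_of_hasDerivAt_of_tendsto' (f := fun u : ℝ => f (u + θ * I))
      (fun u _ => ?_) hg' hlim
    have hline : HasDerivAt (fun u : ℝ => (u : ℂ) + θ * I) 1 u := by
      simpa using Complex.ofRealCLM.hasDerivAt.add_const (θ * I)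
    exact ((hderiv _).comp u hline).congr_deriv (mul_one _)
  rw [intervalIntegral.integral_mul_const, mul_comm] at hsegment
  rw [hankelIntegral, hsegment, hray, Complex.ofReal_zero, zero_mul, add_zero]
  ring

lemma hankelIntegral_eq_integral_add (hθ : 0 ≤ θ)
    (hg : ∀ w : ℂ, w.im ∈ Icc 0 θ → DifferentiableAt ℂ g w) (hab : a ≤ b)
    (hint : IntegrableOn (fun u : ℝ => g (u + θ * I)) (Ioi a)) :
    hankelIntegral θ g a = (∫ x in a..b, g x) + hankelIntegral θ g b := by
  have hdiff : DifferentiableOn ℂ g (uIcc a b ×ℂ uIcc 0 θ) := by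
    intro w hw
    rw [Complex.mem_reProdIm, uIcc_of_le hθ] at hw
    exact (hg w hw.2).differentiableWithinAt
  have hrect : (∫ x in a..b, g x) - (∫ x in a..b, g (x + θ * I)) +
      I * (∫ v in (0 : ℝ)..θ, g (b + v * I)) - I * (∫ v in (0 : ℝ)..θ, g (a + v * I)) = 0 := by
    simpa using Complex.integral_boundary_rect_eq_zero_of_differentiableOn g a (b + θ * I)
      (by simpa using hdiff)
  have hray := intervalIntegral.integral_Ioi_sub_Ioi hint hab
  unfold hankelIntegral
  linear_combination hray - hrect

/-- Cauchy's theorem, applied to the rectangles `[a, b] × [θ, θ']` as `b → ∞`. -/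
lemma hankelIntegral_eq_of_tendsto (hg : Differentiable ℂ g)
    (hint : IntegrableOn (fun u : ℝ => g (u + θ * I)) (Ioi a))
    (hint' : IntegrableOn (fun u : ℝ => g (u + θ' * I)) (Ioi a))
    (hlim : Tendsto (fun b : ℝ => ∫ v in θ..θ', g (b + v * I)) atTop (𝓝 0)) :
    hankelIntegral θ g a = hankelIntegral θ' g a := by
  have hrect (b : ℝ) : (∫ x in a..b, g (x + θ * I)) - (∫ x in a..b, g (x + θ' * I)) +
      I * (∫ v in θ..θ', g (b + v * I)) - I * (∫ v in θ..θ', g (a + v * I)) = 0 := by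
    simpa using Complex.integral_boundary_rect_eq_zero_of_differentiableOn g (a + θ * I)
      (b + θ' * I) hg.differentiableOn
  have hray := intervalIntegral_tendsto_integral_Ioi a hint tendsto_id
  have hray' := intervalIntegral_tendsto_integral_Ioi a hint' tendsto_id
  have hlimit := tendsto_nhds_unique
    (Tendsto.congr hrect (((hray.sub hray').add (hlim.const_mul I)).sub_const _))
    tendsto_const_nhds
  have hc : Continuous fun v : ℝ => g (a + v * I) := hg.continuous.comp (by fun_prop)
  have hadd := intervalIntegral.integral_add_adjacent_intervals (μ := volume)
    (hc.intervalIntegrable 0 θ) (hc.intervalIntegrable θ θ')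
  unfold hankelIntegral
  linear_combination hlimit + I * hadd

lemma hankelIntegral_im_eq (hθ : 0 ≤ θ) (hg : ∀ w : ℂ, w.im ∈ Icc 0 θ → DifferentiableAt ℂ g w)
    (hreal : ∀ x : ℝ, (g x).im = 0) (hab : a ≤ b)
    (hint : IntegrableOn (fun u : ℝ => g (u + θ * I)) (Ioi a)) :
    (hankelIntegral θ g a).im = (hankelIntegral θ g b).im := by
  have hzero : (∫ x in a..b, g x).im = 0 := by
    have hre : ∀ x : ℝ, g x = ((g x).re : ℂ) := fun x =>
      Complex.ext rfl (by rw [hreal, Complex.ofReal_im])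
    rw [intervalIntegral.integral_congr fun x _ => hre x, intervalIntegral.integral_ofReal,
      Complex.ofReal_im]
  rw [hankelIntegral_eq_integral_add hθ hg hab hint, Complex.add_im, hzero, zero_add]

lemma hankelIntegral_im_eq_integral_im (hθ : 0 ≤ θ)
    (hg : ∀ w : ℂ, w.im ∈ Icc 0 θ → DifferentiableAt ℂ g w) (hreal : ∀ x : ℝ, (g x).im = 0)
    (hint : Integrable fun u : ℝ => g (u + θ * I)) {C α : ℝ} (hα : 0 < α)
    (hbound : ∀ w : ℂ, w.re ≤ 0 → w.im ∈ Icc 0 θ → ‖g w‖ ≤ C * rexp (α * w.re)) (a : ℝ) :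
    (hankelIntegral θ g a).im = (∫ u : ℝ, g (u + θ * I)).im := by
  have hray : Tendsto (fun b : ℝ => ∫ u in Ioi b, g (u + θ * I)) atBot
      (𝓝 (∫ u : ℝ, g (u + θ * I))) :=
    (aecover_Ioi tendsto_id).integral_tendsto_of_countably_generated hint
  have hsegment : Tendsto (fun b : ℝ => ∫ v in (0 : ℝ)..θ, g (b + v * I)) atBot (𝓝 0) := by
    have hexp : Tendsto (fun b : ℝ => C * rexp (α * b) * |θ - 0|) atBot (𝓝 0) := by
      simpa using ((tendsto_exp_atBot.comp (tendsto_id.const_mul_atBot hα)).const_mul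
        C).mul_const |θ - 0|
    refine squeeze_zero_norm' ?_ hexp
    filter_upwards [eventually_le_atBot 0] with b hb
    refine intervalIntegral.norm_integral_le_of_norm_le_const fun v hv => ?_
    rw [uIoc_of_le hθ] at hv
    simpa using hbound (b + v * I) (by simpa using hb) (by simpa using Ioc_subset_Icc_self hv)
  have hlim : Tendsto (fun b => (hankelIntegral θ g b).im) atBot
      (𝓝 (∫ u : ℝ, g (u + θ * I)).im) := by
    have h := (hsegment.const_mul I).add hray
    rw [mul_zero, zero_add] at h
    exact (Complex.continuous_im.tendsto _).comp h
  refine tendsto_nhds_unique (tendsto_const_nhds.congr' ?_) hlim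
  filter_upwards [eventually_le_atBot a] with b hb
  exact (hankelIntegral_im_eq hθ hg hreal hb hint.integrableOn).symm

lemma hasSum_hankelIntegral {F : ℕ → ℂ → ℂ} {B : ℂ → ℝ} {q : ℝ} (hF : ∀ k, Continuous (F k))
    (hB : Continuous B) (hBint : IntegrableOn (fun u : ℝ => B (u + θ * I)) (Ioi a))
    (hq0 : 0 ≤ q) (hq1 : q < 1) (hbound : ∀ k, ∀ w : ℂ, a ≤ w.re → ‖F k w‖ ≤ B w * q ^ k)
    (hsum : ∀ w : ℂ, a ≤ w.re → HasSum (fun k => F k w) (g w)) :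
    HasSum (fun k => hankelIntegral θ (F k) a) (hankelIntegral θ g a) := by
  have hgeom := summable_geometric_of_lt_one hq0 hq1
  have hsegment : HasSum (fun k => ∫ v in (0 : ℝ)..θ, F k (a + v * I))
      (∫ v in (0 : ℝ)..θ, g (a + v * I)) := by
    refine intervalIntegral.hasSum_integral_of_dominated_convergence
      (fun k v => B (a + v * I) * q ^ k)
      (fun k => Continuous.aestronglyMeasurable (by fun_prop))
      (fun k => .of_forall fun v _ => hbound k _ (by simp))
      (.of_forall fun v _ => hgeom.mul_left _) ?_
      (.of_forall fun v _ => hsum _ (by simp))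
    simp_rw [tsum_mul_left]
    exact Continuous.intervalIntegrable (by fun_prop) _ _
  have hray : HasSum (fun k => ∫ u in Ioi a, F k (u + θ * I)) (∫ u in Ioi a, g (u + θ * I)) := by
    refine hasSum_integral_of_dominated_convergence (fun k u => B (u + θ * I) * q ^ k)
      (fun k => Continuous.aestronglyMeasurable (by fun_prop)) (fun k => ?_)
      (.of_forall fun u => hgeom.mul_left _) ?_ ?_
    · filter_upwards [ae_restrict_mem measurableSet_Ioi] with u hu
      exact hbound k _ (by simpa using (mem_Ioi.1 hu).le)
    · simp_rw [tsum_mul_left]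
      exact hBint.mul_const _
    · filter_upwards [ae_restrict_mem measurableSet_Ioi] with u hu
      exact hsum _ (by simpa using (mem_Ioi.1 hu).le)
  exact (hsegment.mul_left I).add hray

end HankelIntegral

/-- The integrand `e^z z^(-β) dz / z` of Hankel's formula for `1 / Γ(β + 1)`, in the coordinate
`w = log z`. -/
noncomputable def hankelKernel (β : ℝ) (w : ℂ) : ℂ := cexp (cexp w - β * w)

section HankelKernel

variable {θ θ' : ℝ}

lemma norm_cexp_cexp (w : ℂ) : ‖cexp (cexp w)‖ = rexp (cos w.im * rexp w.re) := by
  rw [Complex.norm_exp, Complex.exp_re, mul_comm (rexp _)]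

lemma hankelKernel_eq_cexp_cexp_mul (β : ℝ) (w : ℂ) :
    hankelKernel β w = cexp (cexp w) * cexp (-β * w) := by
  rw [hankelKernel, ← Complex.exp_add, neg_mul, sub_eq_add_neg]

lemma norm_hankelKernel (β : ℝ) (w : ℂ) :
    ‖hankelKernel β w‖ = rexp (cos w.im * rexp w.re + -β * w.re) := by
  rw [hankelKernel_eq_cexp_cexp_mul, norm_mul, norm_cexp_cexp, Complex.norm_exp, ← Real.exp_add]
  simp

lemma norm_hankelKernel_ray (β θ u : ℝ) :
    ‖hankelKernel β (u + θ * I)‖ = rexp (cos θ * rexp u + -β * u) := by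
  simp [norm_hankelKernel]

lemma hankelKernel_ofReal_im (β x : ℝ) : (hankelKernel β x).im = 0 := by
  rw [hankelKernel]
  norm_cast

lemma hasDerivAt_hankelKernel (β : ℝ) (w : ℂ) :
    HasDerivAt (hankelKernel β) (hankelKernel (β - 1) w - β * hankelKernel β w) w := by
  have hlin : HasDerivAt (fun w : ℂ => β * w) β w := by
    simpa using (hasDerivAt_id w).const_mul (β : ℂ)
  refine ((Complex.hasDerivAt_exp w).sub hlin).cexp.congr_deriv ?_
  have hshift : cexp (cexp w - (β - 1 : ℝ) * w) = cexp (cexp w - β * w) * cexp w := by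
    rw [← Complex.exp_add]
    push_cast
    ring_nf
  simp only [hankelKernel, hshift, Pi.sub_apply]
  ring

lemma differentiable_hankelKernel (β : ℝ) : Differentiable ℂ (hankelKernel β) :=
  fun w => (hasDerivAt_hankelKernel β w).differentiableAt

lemma continuous_hankelKernel (β : ℝ) : Continuous (hankelKernel β) :=
  (differentiable_hankelKernel β).continuous

lemma integrableOn_hankelKernel (hθ : θ ∈ Ioc (π / 2) π) (β a : ℝ) :
    IntegrableOn (fun u : ℝ => hankelKernel β (u + θ * I)) (Ioi a) :=
  (integrableOn_Ioi_exp_mul_exp_add (cos_neg_of_mem_Ioc hθ) (-β) a).mono'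
    ((continuous_hankelKernel β).comp (by fun_prop)).aestronglyMeasurable
    (.of_forall fun u => (norm_hankelKernel_ray β θ u).le)

lemma integrable_hankelKernel (hθ : θ ∈ Ioc (π / 2) π) {β : ℝ} (hβ : β < 0) :
    Integrable fun u : ℝ => hankelKernel β (u + θ * I) :=
  (integrable_exp_mul_exp_add (cos_neg_of_mem_Ioc hθ) (neg_pos.2 hβ)).mono'
    ((continuous_hankelKernel β).comp (by fun_prop)).aestronglyMeasurable
    (.of_forall fun u => (norm_hankelKernel_ray β θ u).le)

lemma hankelIntegral_hankelKernel_im_sub_one (hθ : θ ∈ Ioc (π / 2) π) (β a : ℝ) :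
    (hankelIntegral θ (hankelKernel (β - 1)) a).im =
      β * (hankelIntegral θ (hankelKernel β) a).im := by
  have hc (β : ℝ) := continuous_hankelKernel β
  have hint := integrableOn_hankelKernel hθ (β - 1) a
  have hint' := (integrableOn_hankelKernel hθ β a).const_mul (β : ℂ)
  have hlim : Tendsto (fun u : ℝ => hankelKernel β (u + θ * I)) atTop (𝓝 0) :=
    squeeze_zero_norm (fun u => (norm_hankelKernel_ray β θ u).le)
      (tendsto_exp_mul_exp_add_atTop (cos_neg_of_mem_Ioc hθ) _)
  have hc' : Continuous fun w => β * hankelKernel β w := continuous_const.mul (hc β)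
  have hderiv : hankelIntegral θ (fun w => hankelKernel (β - 1) w - β * hankelKernel β w) a =
      -hankelKernel β a :=
    hankelIntegral_of_hasDerivAt (hasDerivAt_hankelKernel β)
      ((hc _).sub hc') (hint.sub hint') hlim
  rw [hankelIntegral_sub (hc _) hc' hint hint', hankelIntegral_const_mul] at hderiv
  have him := congrArg Complex.im hderiv
  rw [Complex.sub_im, Complex.im_ofReal_mul, Complex.neg_im, hankelKernel_ofReal_im] at him
  linarith

lemma hankelIntegral_hankelKernel_eq (hθ : θ ∈ Ioc (π / 2) π) (β a : ℝ) :
    hankelIntegral θ (hankelKernel β) a = hankelIntegral π (hankelKernel β) a := by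
  refine hankelIntegral_eq_of_tendsto (differentiable_hankelKernel β)
    (integrableOn_hankelKernel hθ β a)
    (integrableOn_hankelKernel (right_mem_Ioc.2 (by linarith [pi_pos])) β a) ?_
  have hexp := (tendsto_exp_mul_exp_add_atTop (cos_neg_of_mem_Ioc hθ) (-β)).mul_const |π - θ|
  rw [zero_mul] at hexp
  refine squeeze_zero_norm (fun b => ?_) hexp
  refine intervalIntegral.norm_integral_le_of_norm_le_const fun v hv => ?_
  rw [uIoc_of_le hθ.2] at hv
  rw [norm_hankelKernel_ray]
  have hcos : cos v ≤ cos θ :=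
    cos_le_cos_of_nonneg_of_le_pi (by linarith [hθ.1, pi_pos]) hv.2 hv.1.le
  gcongr

lemma hankelIntegral_hankelKernel_im_eq_integral_im (hθ : θ ∈ Ioc (π / 2) π) {β : ℝ} (hβ : β < 0)
    (a : ℝ) :
    (hankelIntegral θ (hankelKernel β) a).im = (∫ u : ℝ, hankelKernel β (u + θ * I)).im := by
  have hbound (w : ℂ) (hw : w.re ≤ 0) (_ : w.im ∈ Icc 0 θ) :
      ‖hankelKernel β w‖ ≤ rexp 1 * rexp (-β * w.re) := by
    rw [norm_hankelKernel, ← Real.exp_add]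
    have h := cos_mul_exp_le_one w.im hw
    gcongr
  exact hankelIntegral_im_eq_integral_im (by linarith [hθ.1, pi_pos])
    (fun w _ => differentiable_hankelKernel β w) (hankelKernel_ofReal_im β)
    (integrable_hankelKernel hθ hβ) (neg_pos.2 hβ) hbound a

lemma hankelKernel_add_pi_mul_I_im (β u : ℝ) :
    (hankelKernel β (u + π * I)).im = -sin (π * β) * rexp (-rexp u + -β * u) := by
  have hexp : cexp (u + π * I) - β * (u + π * I) =
      ⟨-rexp u + -β * u, -(π * β)⟩ := by
    rw [Complex.exp_add, Complex.exp_pi_mul_I, Complex.mk_eq_add_mul_I]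
    push_cast
    ring
  rw [hankelKernel, hexp, Complex.exp_im, sin_neg, mul_comm]

lemma hankelIntegral_pi_hankelKernel_im_of_neg {β : ℝ} (hβ : β < 0) (a : ℝ) :
    (hankelIntegral π (hankelKernel β) a).im = π / Gamma (β + 1) := by
  have hπ : π ∈ Ioc (π / 2) π := right_mem_Ioc.2 (by linarith [pi_pos])
  rw [hankelIntegral_hankelKernel_im_eq_integral_im hπ hβ, ← RCLike.im_eq_complex_im,
    ← integral_im (integrable_hankelKernel hπ hβ)]
  simp only [RCLike.im_eq_complex_im, hankelKernel_add_pi_mul_I_im]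
  rw [integral_const_mul, integral_exp_neg_exp_add (neg_pos.2 hβ)]
  have hreflect := Gamma_mul_Gamma_one_sub (-β)
  rw [sub_neg_eq_add, mul_neg, sin_neg, add_comm 1] at hreflect
  have hΓ : Gamma (β + 1) = π / (-sin (π * β) * Gamma (-β)) := by
    rw [← div_div, ← hreflect, mul_div_cancel_left₀ _ (Gamma_pos_of_pos (neg_pos.2 hβ)).ne']
  rw [hΓ, div_div_cancel₀ pi_ne_zero]

lemma hankelIntegral_pi_hankelKernel_zero_im (a : ℝ) :
    (hankelIntegral π (hankelKernel 0) a).im = π := by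
  have hπ : π ∈ Ioc (π / 2) π := right_mem_Ioc.2 (by linarith [pi_pos])
  have hsegment (b : ℝ) : (hankelIntegral π (hankelKernel 0) b).im =
      (∫ v in (0 : ℝ)..π, cexp (rexp b * cexp (v * I))).re := by
    have hray : (∫ u in Ioi b, hankelKernel 0 (u + π * I)).im = 0 := by
      rw [← RCLike.im_eq_complex_im, ← integral_im (integrableOn_hankelKernel hπ 0 b)]
      simp [hankelKernel_add_pi_mul_I_im]
    rw [hankelIntegral, Complex.add_im, hray, add_zero, Complex.I_mul_im]
    simp [hankelKernel, Complex.exp_add]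
  have hcont : Continuous fun s : ℝ => (∫ v in (0 : ℝ)..π, cexp (s * cexp (v * I))).re :=
    Complex.continuous_re.comp
      (intervalIntegral.continuous_parametric_intervalIntegral_of_continuous' (by fun_prop) _ _)
  have hlim : Tendsto (fun b => (hankelIntegral π (hankelKernel 0) b).im) atBot (𝓝 π) := by
    simp_rw [hsegment]
    exact (hcont.tendsto' 0 π (by simp)).comp tendsto_exp_atBot
  refine tendsto_nhds_unique (tendsto_const_nhds.congr' ?_) hlim
  filter_upwards [eventually_le_atBot a] with b hb
  exact (hankelIntegral_im_eq pi_pos.le (fun w _ => differentiable_hankelKernel 0 w)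
    (hankelKernel_ofReal_im 0) hb (integrableOn_hankelKernel hπ 0 b)).symm

lemma hankelIntegral_hankelKernel_im (hθ : θ ∈ Ioc (π / 2) π) (β a : ℝ) :
    (hankelIntegral θ (hankelKernel β) a).im = π / Gamma (β + 1) := by
  rw [hankelIntegral_hankelKernel_eq hθ]
  obtain ⟨n, hn⟩ := exists_nat_ge β
  induction n generalizing β with
  | zero =>
    rcases (show β ≤ 0 by simpa using hn).lt_or_eq with hβ | rfl
    · exact hankelIntegral_pi_hankelKernel_im_of_neg hβ a
    · rw [hankelIntegral_pi_hankelKernel_zero_im, zero_add, Gamma_one, div_one]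
  | succ n ih =>
    rcases le_or_gt β n with hβ | hβ
    · exact ih β hβ
    · have hβ0 : 0 < β := n.cast_nonneg.trans_lt hβ
      have h := ih (β - 1) (by push_cast at hn; linarith)
      rw [hankelIntegral_hankelKernel_im_sub_one (right_mem_Ioc.2 (by linarith [pi_pos])),
        sub_add_cancel] at h
      rw [Gamma_add_one hβ0.ne', mul_comm, ← div_div, ← h, mul_div_cancel_left₀ _ hβ0.ne']

lemma integral_hankelKernel_im (hθ : θ ∈ Ioc (π / 2) π) {β : ℝ} (hβ : β < 0) :
    (∫ u : ℝ, hankelKernel β (u + θ * I)).im = π / Gamma (β + 1) := by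
  rw [← hankelIntegral_hankelKernel_im_eq_integral_im hθ hβ 0, hankelIntegral_hankelKernel_im hθ]

end HankelKernel

/-- The integrand `e^z z^ρ / (z^ρ + x) dz / z` of the Hankel-type formula for `E_ρ(-x)`, in the
coordinate `w = log z`. -/
noncomputable def mittagLefflerKernel (ρ x : ℝ) (w : ℂ) : ℂ :=
  cexp (cexp w) * (cexp (ρ * w) / (cexp (ρ * w) + x))

section MittagLefflerKernel

variable {θ ρ x : ℝ} {w : ℂ}

lemma sin_mul_le_norm_cexp_add (hθ : θ ∈ Icc (π / 2) π) (hx : 0 ≤ x) (hw : w.im ∈ Icc 0 θ) :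
    sin θ * x ≤ ‖cexp w + x‖ := by
  rcases le_total w.im (π / 2) with hv | hv
  · calc sin θ * x ≤ x := mul_le_of_le_one_left hx (sin_le_one θ)
      _ ≤ (cexp w + x).re := by
        rw [Complex.add_re, Complex.exp_re, Complex.ofReal_re]
        have := cos_nonneg_of_neg_pi_div_two_le_of_le (by linarith [hw.1, pi_pos]) hv
        exact le_add_of_nonneg_left (by positivity)
      _ ≤ _ := Complex.re_le_norm _
  · have hsin : sin θ ≤ sin w.im := by
      rw [← sin_pi_sub θ, ← sin_pi_sub w.im]
      exact sin_le_sin_of_le_of_le_pi_div_two (by linarith [hθ.2, pi_pos]) (by linarith)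
        (by linarith [hw.2])
    refine (mul_le_mul_of_nonneg_right hsin hx).trans (le_of_sq_le_sq ?_ (norm_nonneg _))
    rw [Complex.sq_norm, Complex.normSq_apply, Complex.add_re, Complex.add_im, Complex.exp_re,
      Complex.exp_im, Complex.ofReal_re, Complex.ofReal_im]
    calc (sin w.im * x) ^ 2 ≤ (sin w.im * x) ^ 2 + (rexp w.re + x * cos w.im) ^ 2 :=
          le_add_of_nonneg_right (sq_nonneg _)
      _ = _ := by linear_combination (x ^ 2 - rexp w.re ^ 2) * sin_sq_add_cos_sq w.im

lemma sin_mul_le_norm_cexp_mul_add (hθ : θ ∈ Icc (π / 2) π) (hρ : ρ ∈ Icc 0 1) (hx : 0 ≤ x)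
    (hw : w.im ∈ Icc 0 θ) : sin θ * x ≤ ‖cexp (ρ * w) + x‖ := by
  refine sin_mul_le_norm_cexp_add hθ hx ?_
  rw [Complex.im_ofReal_mul]
  exact ⟨mul_nonneg hρ.1 hw.1, (mul_le_of_le_one_left hw.1 hρ.2).trans hw.2⟩

lemma cexp_mul_add_ne_zero (hθ : θ ∈ Ioo (π / 2) π) (hρ : ρ ∈ Icc 0 1) (hx : 0 < x)
    (hw : w.im ∈ Icc 0 θ) : cexp (ρ * w) + x ≠ 0 :=
  norm_pos_iff.1 ((mul_pos (sin_pos_of_mem_Ioo hθ) hx).trans_le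
    (sin_mul_le_norm_cexp_mul_add (Ioo_subset_Icc_self hθ) hρ hx.le hw))

lemma norm_mittagLefflerKernel_le (hθ : θ ∈ Ioo (π / 2) π) (hρ : ρ ∈ Icc 0 1) (hx : 0 < x)
    (hw : w.im ∈ Icc 0 θ) :
    ‖mittagLefflerKernel ρ x w‖ ≤ (sin θ * x)⁻¹ * rexp (cos w.im * rexp w.re + ρ * w.re) := by
  have hsin := sin_pos_of_mem_Ioo hθ
  have hnum : ‖cexp (ρ * w)‖ = rexp (ρ * w.re) := by
    rw [Complex.norm_exp, Complex.re_ofReal_mul]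
  rw [mittagLefflerKernel, norm_mul, norm_div, norm_cexp_cexp, hnum, Real.exp_add, ← mul_div_assoc,
    inv_mul_eq_div]
  gcongr
  exact sin_mul_le_norm_cexp_mul_add (Ioo_subset_Icc_self hθ) hρ hx.le hw

lemma mittagLefflerKernel_ofReal_im (ρ x u : ℝ) : (mittagLefflerKernel ρ x u).im = 0 := by
  rw [mittagLefflerKernel]
  norm_cast

lemma differentiableAt_mittagLefflerKernel (hw : cexp (ρ * w) + x ≠ 0) :
    DifferentiableAt ℂ (mittagLefflerKernel ρ x) w := by
  unfold mittagLefflerKernel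
  fun_prop (disch := exact hw)

lemma integrable_mittagLefflerKernel (hθ : θ ∈ Ioo (π / 2) π) (hρ : ρ ∈ Ioc 0 1) (hx : 0 < x) :
    Integrable fun u : ℝ => mittagLefflerKernel ρ x (u + θ * I) := by
  have hθ0 : 0 ≤ θ := by linarith [hθ.1, pi_pos]
  have him (u : ℝ) : ((u : ℂ) + θ * I).im ∈ Icc 0 θ := by simp [hθ0]
  have hcont : Continuous fun u : ℝ => mittagLefflerKernel ρ x (u + θ * I) :=
    continuous_iff_continuousAt.2 fun u => ContinuousAt.comp
      (f := fun u : ℝ => (u : ℂ) + θ * I)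
      (differentiableAt_mittagLefflerKernel
        (cexp_mul_add_ne_zero hθ (Ioc_subset_Icc_self hρ) hx (him u))).continuousAt (by fun_prop)
  refine ((integrable_exp_mul_exp_add (cos_neg_of_mem_Ioc (Ioo_subset_Ioc_self hθ))
    hρ.1).const_mul (sin θ * x)⁻¹).mono' hcont.aestronglyMeasurable (.of_forall fun u => ?_)
  simpa using norm_mittagLefflerKernel_le hθ (Ioc_subset_Icc_self hρ) hx (him u)

lemma hankelIntegral_mittagLefflerKernel_im (hθ : θ ∈ Ioo (π / 2) π) (hρ : ρ ∈ Ioc 0 1)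
    (hx : 0 < x) (a : ℝ) : (hankelIntegral θ (mittagLefflerKernel ρ x) a).im =
      (∫ u : ℝ, mittagLefflerKernel ρ x (u + θ * I)).im := by
  have hρ' := Ioc_subset_Icc_self hρ
  have hsin := sin_pos_of_mem_Ioo hθ
  refine hankelIntegral_im_eq_integral_im (by linarith [hθ.1, pi_pos])
    (fun w hw => differentiableAt_mittagLefflerKernel (cexp_mul_add_ne_zero hθ hρ' hx hw))
    (mittagLefflerKernel_ofReal_im ρ x) (integrable_mittagLefflerKernel hθ hρ hx) hρ.1
    (C := (sin θ * x)⁻¹ * rexp 1) (fun w hre him => ?_) a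
  refine (norm_mittagLefflerKernel_le hθ hρ' hx him).trans ?_
  have h := cos_mul_exp_le_one w.im hre
  rw [mul_assoc, ← Real.exp_add]
  gcongr

lemma neg_pow_mul_hankelKernel (ρ x : ℝ) (k : ℕ) (w : ℂ) :
    (-x) ^ k * hankelKernel (ρ * k) w = cexp (cexp w) * (-x * cexp (-ρ * w)) ^ k := by
  rw [hankelKernel_eq_cexp_cexp_mul, mul_pow, ← Complex.exp_nat_mul]
  push_cast
  ring_nf

lemma norm_neg_mul_cexp (hx : 0 ≤ x) (ρ : ℝ) (w : ℂ) :
    ‖-x * cexp (-ρ * w)‖ = x * rexp (-ρ * w.re) := by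
  rw [norm_mul, norm_neg, Complex.norm_real, Real.norm_of_nonneg hx, Complex.norm_exp,
    ← Complex.ofReal_neg, Complex.re_ofReal_mul]

lemma hasSum_neg_pow_mul_hankelKernel (hx : 0 ≤ x) (hw : x * rexp (-ρ * w.re) < 1) :
    HasSum (fun k : ℕ => (-x) ^ k * hankelKernel (ρ * k) w) (mittagLefflerKernel ρ x w) := by
  simp_rw [neg_pow_mul_hankelKernel]
  have hne := Complex.exp_ne_zero (ρ * w)
  have hratio : 1 - -(x : ℂ) * cexp (-ρ * w) = (cexp (ρ * w) + x) / cexp (ρ * w) := by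
    rw [neg_mul (ρ : ℂ), Complex.exp_neg]
    field_simp
    ring
  rw [mittagLefflerKernel, ← inv_div, ← hratio]
  exact (hasSum_geometric_of_norm_lt_one ((norm_neg_mul_cexp hx ρ w).trans_lt hw)).mul_left _

/-- Far to the right on the contour, the kernel expands into a geometric series, which is
integrated termwise. -/
lemma pi_mul_mittagLeffler_neg (hθ : θ ∈ Ioo (π / 2) π) (hρ : ρ ∈ Ioc 0 1) (hx : 0 < x) :
    π * mittagLeffler ρ (-x) = (∫ u : ℝ, mittagLefflerKernel ρ x (u + θ * I)).im := by
  have hθ' := Ioo_subset_Ioc_self hθ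
  obtain ⟨a, ha⟩ : ∃ a, x * rexp (-ρ * a) < 1 := by
    refine ⟨(log x + 1) / ρ, ?_⟩
    rw [neg_mul, mul_div_cancel₀ _ hρ.1.ne', ← Real.exp_log hx, ← Real.exp_add, Real.log_exp]
    exact Real.exp_lt_one_iff.2 (by linarith)
  have hdecay (w : ℂ) (hw : a ≤ w.re) : x * rexp (-ρ * w.re) ≤ x * rexp (-ρ * a) := by
    have := mul_le_mul_of_nonneg_left hw hρ.1.le
    rw [neg_mul, neg_mul]
    gcongr
  have hB : IntegrableOn (fun u : ℝ => ‖cexp (cexp (u + θ * I))‖) (Ioi a) := by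
    simpa [norm_cexp_cexp] using
      integrableOn_Ioi_exp_mul_exp_add (cos_neg_of_mem_Ioc hθ') 0 a
  have hsum : HasSum
      (fun k : ℕ => hankelIntegral θ (fun w => (-x : ℂ) ^ k * hankelKernel (ρ * k) w) a)
      (hankelIntegral θ (mittagLefflerKernel ρ x) a) := by
    refine hasSum_hankelIntegral (fun k => continuous_const.mul (continuous_hankelKernel _))
      (B := fun w => ‖cexp (cexp w)‖) (by fun_prop) hB (by positivity) ha (fun k w hw => ?_)
      fun w hw => hasSum_neg_pow_mul_hankelKernel hx.le ((hdecay w hw).trans_lt ha)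
    rw [neg_pow_mul_hankelKernel, norm_mul, norm_pow, norm_neg_mul_cexp hx.le]
    exact mul_le_mul_of_nonneg_left (pow_le_pow_left₀ (by positivity) (hdecay w hw) k)
      (norm_nonneg _)
  have him := (Complex.hasSum_iff _ _).1 hsum |>.2
  have hterm (k : ℕ) : (hankelIntegral θ (fun w => (-x : ℂ) ^ k * hankelKernel (ρ * k) w) a).im =
      π * ((-x) ^ k / Gamma (ρ * k + 1)) := by
    rw [hankelIntegral_const_mul, ← Complex.ofReal_neg, ← Complex.ofReal_pow,
      Complex.im_ofReal_mul, hankelIntegral_hankelKernel_im hθ']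
    ring
  simp_rw [hterm] at him
  rw [mittagLeffler, ← tsum_mul_left, him.tsum_eq, hankelIntegral_mittagLefflerKernel_im hθ hρ hx]

end MittagLefflerKernel

/-- The part `z ^ 2 / (z + l)` of `l z / (z + l) = z - z ^ 2 / (z + l)` at `z = e^(ρ w)`. With
`w - log t` in place of `w`, the part `z` gives the leading term of `E_ρ(-l t^ρ)` as `t → ∞` and
this part gives the remainder. -/
noncomputable def mittagLefflerRemainder (l ρ : ℝ) (w : ℂ) : ℂ :=
  cexp (ρ * w) ^ 2 / (cexp (ρ * w) + l)

section MittagLefflerRemainder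

variable {θ r ρ σ l t : ℝ} {w : ℂ}

lemma hasDerivAt_mittagLefflerRemainder (hw : cexp (ρ * w) + l ≠ 0) :
    HasDerivAt (fun ρ : ℝ => mittagLefflerRemainder l ρ w)
      (w * cexp (ρ * w) ^ 2 * (cexp (ρ * w) + 2 * l) / (cexp (ρ * w) + l) ^ 2) ρ := by
  have hexp : HasDerivAt (fun ρ : ℝ => cexp (ρ * w)) (cexp (ρ * w) * w) ρ := by
    simpa using (Complex.ofRealCLM.hasDerivAt.mul_const w).cexp
  refine ((hexp.pow 2).div (hexp.add_const (l : ℂ)) hw).congr_deriv ?_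
  simp only [Pi.pow_apply]
  push_cast
  ring

lemma norm_add_two_mul_div_sq_le {s : ℝ} (hs : s ∈ Ioc 0 1) (hl : 0 < l) {z : ℂ}
    (hz : s * l ≤ ‖z + l‖) : ‖(z + 2 * l) / (z + l) ^ 2‖ ≤ 2 / (s ^ 2 * l) := by
  have hs0 : 0 < s := hs.1
  have hz0 : 0 < ‖z + l‖ := (mul_pos hs0 hl).trans_le hz
  have hnum : ‖z + 2 * l‖ ≤ ‖z + l‖ + l := by
    rw [show z + 2 * l = z + l + l by ring]
    simpa [abs_of_pos hl] using norm_add_le (z + l) (l : ℂ)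
  calc ‖(z + 2 * l) / (z + l) ^ 2‖ ≤ (‖z + l‖ + l) / ‖z + l‖ ^ 2 := by
        rw [norm_div, norm_pow]
        gcongr
    _ = 1 / ‖z + l‖ + l / ‖z + l‖ ^ 2 := by field_simp
    _ ≤ 1 / (s * l) + l / (s * l) ^ 2 := by gcongr
    _ = (s + 1) / (s ^ 2 * l) := by field_simp
    _ ≤ 2 / (s ^ 2 * l) := by
        gcongr
        linarith [hs.2]

lemma norm_mittagLefflerRemainder_sub_le (hθ : θ ∈ Ioo (π / 2) π) (hρ : 0 ≤ ρ) (hρσ : ρ ≤ σ)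
    (hσ : σ ≤ 1) (hl : 0 < l) (hw : w.im ∈ Icc 0 θ) :
    ‖mittagLefflerRemainder l σ w - mittagLefflerRemainder l ρ w‖ ≤
      2 / (sin θ ^ 2 * l) * ‖w‖ * (rexp (ρ * (2 * w.re)) + rexp (σ * (2 * w.re))) * (σ - ρ) := by
  have hτ {τ : ℝ} (h : τ ∈ Icc ρ σ) : τ ∈ Icc 0 1 := ⟨hρ.trans h.1, h.2.trans hσ⟩
  have hbound (τ : ℝ) (h : τ ∈ Icc ρ σ) :
      ‖w * cexp (τ * w) ^ 2 * (cexp (τ * w) + 2 * l) / (cexp (τ * w) + l) ^ 2‖ ≤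
        2 / (sin θ ^ 2 * l) * ‖w‖ * (rexp (ρ * (2 * w.re)) + rexp (σ * (2 * w.re))) := by
    have hsq : ‖cexp (τ * w)‖ ^ 2 = rexp (τ * (2 * w.re)) := by
      rw [Complex.norm_exp, Complex.re_ofReal_mul, ← Real.exp_nat_mul]
      push_cast
      ring_nf
    rw [mul_div_assoc, norm_mul, norm_mul, norm_pow, hsq]
    refine (mul_le_mul (mul_le_mul_of_nonneg_left (exp_mul_le_add h _) (norm_nonneg w))
      (norm_add_two_mul_div_sq_le ⟨sin_pos_of_mem_Ioo hθ, sin_le_one θ⟩ hl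
        (sin_mul_le_norm_cexp_mul_add (Ioo_subset_Icc_self hθ) (hτ h) hl.le hw))
      (norm_nonneg _) (by positivity)).trans_eq ?_
    ring
  have hmvt := (convex_Icc ρ σ).norm_image_sub_le_of_norm_hasDerivWithin_le
    (fun τ h => (hasDerivAt_mittagLefflerRemainder
      (cexp_mul_add_ne_zero hθ (hτ h) hl hw)).hasDerivWithinAt) hbound
    (left_mem_Icc.2 hρσ) (right_mem_Icc.2 hρσ)
  rwa [Real.norm_of_nonneg (sub_nonneg.2 hρσ)] at hmvt

lemma mul_mittagLefflerKernel_eq (ht : 0 < t) (hw : cexp (ρ * (w - log t)) + l ≠ 0) :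
    l * mittagLefflerKernel ρ (l * t ^ ρ) w = (t ^ (-ρ) : ℝ) * hankelKernel (-ρ) w -
      cexp (cexp w) * mittagLefflerRemainder l ρ (w - log t) := by
  have htρ : ((t ^ ρ : ℝ) : ℂ) ≠ 0 := by exact_mod_cast (rpow_pos_of_pos ht ρ).ne'
  have hscale : cexp (ρ * w) = (t ^ ρ : ℝ) * cexp (ρ * (w - log t)) := by
    rw [rpow_def_of_pos ht, Complex.ofReal_exp, ← Complex.exp_add]
    push_cast
    ring_nf
  have hden : cexp (ρ * w) + (l * t ^ ρ : ℝ) = (t ^ ρ : ℝ) * (cexp (ρ * (w - log t)) + l) := by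
    rw [hscale, Complex.ofReal_mul]
    ring
  rw [mittagLefflerKernel, mittagLefflerRemainder, hankelKernel_eq_cexp_cexp_mul, rpow_neg ht.le,
    hden, hscale, Complex.ofReal_neg, neg_neg, hscale, Complex.ofReal_inv]
  field_simp
  ring

lemma sub_log_im_mem_Icc (hθ : 0 ≤ θ) (t u : ℝ) :
    ((u : ℂ) + θ * I - log t).im ∈ Icc 0 θ := by
  simp [hθ]

lemma cexp_cexp_mul_mittagLefflerRemainder_eq (hθ : θ ∈ Ioo (π / 2) π) (hρ : ρ ∈ Ioc 0 1)
    (hl : 0 < l) (ht : 0 < t) (u : ℝ) :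
    cexp (cexp (u + θ * I)) * mittagLefflerRemainder l ρ (u + θ * I - log t) =
      (t ^ (-ρ) : ℝ) * hankelKernel (-ρ) (u + θ * I) -
        l * mittagLefflerKernel ρ (l * t ^ ρ) (u + θ * I) := by
  rw [mul_mittagLefflerKernel_eq ht (cexp_mul_add_ne_zero hθ (Ioc_subset_Icc_self hρ) hl
    (sub_log_im_mem_Icc (by linarith [hθ.1, pi_pos]) t u)), sub_sub_cancel]

lemma integrable_cexp_cexp_mul_mittagLefflerRemainder (hθ : θ ∈ Ioo (π / 2) π)
    (hρ : ρ ∈ Ioc 0 1) (hl : 0 < l) (ht : 0 < t) :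
    Integrable fun u : ℝ =>
      cexp (cexp (u + θ * I)) * mittagLefflerRemainder l ρ (u + θ * I - log t) := by
  simp_rw [cexp_cexp_mul_mittagLefflerRemainder_eq hθ hρ hl ht]
  exact ((integrable_hankelKernel (Ioo_subset_Ioc_self hθ) (neg_lt_zero.2 hρ.1)).const_mul _).sub
    ((integrable_mittagLefflerKernel hθ hρ (by positivity)).const_mul _)

/-- The remainder in the asymptotic formula `l π E_ρ(-l t^ρ) ≈ π t^(-ρ) / Γ(1 - ρ)`, up to sign, as
an integral along the ray `arg z = θ`. -/
noncomputable def mittagLefflerRemainderIntegral (θ l t ρ : ℝ) : ℝ :=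
  (∫ u : ℝ, cexp (cexp (u + θ * I)) * mittagLefflerRemainder l ρ (u + θ * I - log t)).im

lemma mul_pi_mul_mittagLeffler_eq (hθ : θ ∈ Ioo (π / 2) π) (hρ : ρ ∈ Ioc 0 1) (hl : 0 < l)
    (ht : 0 < t) : l * (π * mittagLeffler ρ (-(l * t ^ ρ))) =
      t ^ (-ρ) * (π * (Gamma (1 - ρ))⁻¹) - mittagLefflerRemainderIntegral θ l t ρ := by
  have hθ' := Ioo_subset_Ioc_self hθ
  have hρ' : -ρ < 0 := neg_lt_zero.2 hρ.1
  have hx : 0 < l * t ^ ρ := by positivity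
  simp_rw [mittagLefflerRemainderIntegral, cexp_cexp_mul_mittagLefflerRemainder_eq hθ hρ hl ht]
  rw [integral_sub ((integrable_hankelKernel hθ' hρ').const_mul _)
    ((integrable_mittagLefflerKernel hθ hρ hx).const_mul _), integral_const_mul,
    integral_const_mul, Complex.sub_im, Complex.im_ofReal_mul, Complex.im_ofReal_mul,
    integral_hankelKernel_im hθ' hρ', ← pi_mul_mittagLeffler_neg hθ hρ hx, neg_add_eq_sub,
    div_eq_mul_inv, sub_sub_cancel]

end MittagLefflerRemainder

section Monotonicity

variable {θ r ρ σ l t : ℝ}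

lemma norm_add_mul_I_sub_log_le (hθ : 0 ≤ θ) (ht : 1 ≤ t) (u : ℝ) :
    ‖(u : ℂ) + θ * I - log t‖ ≤ (|u| + (θ + 1)) * (1 + log t) := by
  have hlog := log_nonneg ht
  calc ‖(u : ℂ) + θ * I - log t‖ ≤ ‖(u : ℂ)‖ + ‖(θ : ℂ) * I‖ + ‖(log t : ℂ)‖ :=
        (norm_sub_le _ _).trans (add_le_add_left (norm_add_le _ _) _)
    _ = |u| + θ + log t := by simp [abs_of_nonneg hθ, abs_of_nonneg hlog]
    _ ≤ _ := by nlinarith [abs_nonneg u, mul_nonneg hθ hlog, mul_nonneg (abs_nonneg u) hlog]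

lemma exp_mul_two_mul_sub_log_le (hσ : σ ∈ Icc r 1) (hρσ : ρ ≤ σ) (ht : 1 ≤ t) (u : ℝ) :
    rexp (σ * (2 * (u - log t))) ≤
      (t ^ (-ρ)) ^ 2 * (rexp (2 * r * u) + rexp (2 * u)) := by
  have hlog := log_nonneg ht
  calc rexp (σ * (2 * (u - log t))) = rexp (-(σ * log t)) ^ 2 * rexp (σ * (2 * u)) := by
        rw [← Real.exp_nat_mul, ← Real.exp_add]
        push_cast
        ring_nf
    _ ≤ rexp (-(ρ * log t)) ^ 2 * (rexp (r * (2 * u)) + rexp (1 * (2 * u))) := by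
        gcongr
        exact exp_mul_le_add hσ _
    _ = _ := by
        rw [rpow_def_of_pos (by linarith)]
        ring_nf

/-- A majorant, uniform in `ρ ∈ [r, 1]`, for the Lipschitz constant in `ρ` of the remainder
integrand on the ray, up to a factor depending on `t` and `l` only. -/
noncomputable def remainderMajorant (θ r u : ℝ) : ℝ :=
  (|u| + (θ + 1)) * rexp (cos θ * rexp u + 2 * r * u) +
    (|u| + (θ + 1)) * rexp (cos θ * rexp u + 2 * u)

lemma integrable_remainderMajorant (hθ : θ ∈ Ioc (π / 2) π) (hr : 0 < r) :
    Integrable (remainderMajorant θ r) :=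
  (integrable_abs_add_mul_exp_mul_exp_add (cos_neg_of_mem_Ioc hθ) (by positivity) _).add
    (integrable_abs_add_mul_exp_mul_exp_add (cos_neg_of_mem_Ioc hθ) two_pos _)

lemma norm_cexp_cexp_mul_mittagLefflerRemainder_sub_le (hθ : θ ∈ Ioo (π / 2) π)
    (hr : 0 < r) (hρ : r ≤ ρ) (hρσ : ρ ≤ σ) (hσ : σ ≤ 1) (hl : 0 < l) (ht : 1 ≤ t) (u : ℝ) :
    ‖cexp (cexp (u + θ * I)) * mittagLefflerRemainder l ρ (u + θ * I - log t) -
      cexp (cexp (u + θ * I)) * mittagLefflerRemainder l σ (u + θ * I - log t)‖ ≤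
      4 / (sin θ ^ 2 * l) * (1 + log t) * (t ^ (-ρ)) ^ 2 * (σ - ρ) * remainderMajorant θ r u := by
  have hsin := sin_pos_of_mem_Ioo hθ
  have hlog := log_nonneg ht
  have hre : ((u : ℂ) + θ * I - log t).re = u - log t := by simp
  have hθ0 : 0 ≤ θ := by linarith [hθ.1, pi_pos]
  have hnorm := norm_add_mul_I_sub_log_le hθ0 ht u
  have hremainder := norm_mittagLefflerRemainder_sub_le hθ (hr.le.trans hρ) hρσ hσ hl
    (sub_log_im_mem_Icc hθ0 t u)
  have hE : rexp (ρ * (2 * (u - log t))) + rexp (σ * (2 * (u - log t))) ≤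
      2 * ((t ^ (-ρ)) ^ 2 * (rexp (2 * r * u) + rexp (2 * u))) := by
    linarith [exp_mul_two_mul_sub_log_le ⟨hρ, hρσ.trans hσ⟩ le_rfl ht u,
      exp_mul_two_mul_sub_log_le ⟨hρ.trans hρσ, hσ⟩ hρσ ht u]
  rw [hre] at hremainder
  have := sub_nonneg.2 hρσ
  calc _ = rexp (cos θ * rexp u) * ‖mittagLefflerRemainder l σ (u + θ * I - log t) -
          mittagLefflerRemainder l ρ (u + θ * I - log t)‖ := by
        rw [norm_sub_rev, ← mul_sub, norm_mul, norm_cexp_cexp]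
        simp
    _ ≤ rexp (cos θ * rexp u) * (2 / (sin θ ^ 2 * l) * ((|u| + (θ + 1)) * (1 + log t)) *
          (2 * ((t ^ (-ρ)) ^ 2 * (rexp (2 * r * u) + rexp (2 * u)))) * (σ - ρ)) := by
        refine mul_le_mul_of_nonneg_left (hremainder.trans ?_) (Real.exp_pos _).le
        gcongr
    _ = _ := by
        rw [remainderMajorant, Real.exp_add, Real.exp_add]
        ring

lemma exists_mittagLefflerRemainderIntegral_sub_le (hθ : θ ∈ Ioo (π / 2) π) (hr : 0 < r) :
    ∃ C : ℝ, 0 ≤ C ∧ ∀ ρ σ l t : ℝ, r ≤ ρ → ρ ≤ σ → σ ≤ 1 → 0 < l → 1 ≤ t →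
      mittagLefflerRemainderIntegral θ l t ρ - mittagLefflerRemainderIntegral θ l t σ ≤
        C / l * (1 + log t) * (t ^ (-ρ)) ^ 2 * (σ - ρ) := by
  have hM := integrable_remainderMajorant (Ioo_subset_Ioc_self hθ) hr
  have hM0 (u : ℝ) : 0 ≤ remainderMajorant θ r u := by
    have : 0 ≤ θ := by linarith [hθ.1, pi_pos]
    unfold remainderMajorant
    positivity
  refine ⟨4 / sin θ ^ 2 * ∫ u, remainderMajorant θ r u,
    mul_nonneg (by positivity) (integral_nonneg hM0), fun ρ σ l t hρ hρσ hσ hl ht => ?_⟩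
  have ht0 : 0 < t := by linarith
  have hbound := norm_cexp_cexp_mul_mittagLefflerRemainder_sub_le hθ hr hρ hρσ hσ hl ht
  rw [mittagLefflerRemainderIntegral, mittagLefflerRemainderIntegral, ← Complex.sub_im,
    ← integral_sub
    (integrable_cexp_cexp_mul_mittagLefflerRemainder hθ ⟨hr.trans_le hρ, hρσ.trans hσ⟩ hl ht0)
    (integrable_cexp_cexp_mul_mittagLefflerRemainder hθ ⟨hr.trans_le (hρ.trans hρσ), hσ⟩ hl ht0)]
  refine ((Complex.im_le_norm _).trans (norm_integral_le_of_norm_le (hM.const_mul _)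
    (.of_forall hbound))).trans_eq ?_
  rw [integral_const_mul]
  field_simp

lemma mittagLeffler_lt_of_lt (hρ : 0 < ρ) (hρσ : ρ < σ) (hσ : σ ≤ 1) (hl : 0 < l) (ht : 1 ≤ t)
    (hθ : θ ∈ Ioo (π / 2) π) {D : ℝ}
    (hR : mittagLefflerRemainderIntegral θ l t ρ - mittagLefflerRemainderIntegral θ l t σ ≤
      D * t ^ (-ρ) * (σ - ρ)) (hD : D < π * γ) :
    mittagLeffler σ (-(l * t ^ σ)) < mittagLeffler ρ (-(l * t ^ ρ)) := by
  have ht0 : 0 < t := by linarith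
  have hpow : t ^ (-σ) ≤ t ^ (-ρ) := rpow_le_rpow_of_exponent_le ht (by linarith)
  have hΓ0 : 0 ≤ (Gamma (1 - σ))⁻¹ := inv_nonneg.2 (Gamma_nonneg_of_nonneg (sub_nonneg.2 hσ))
  have hΓ : γ * (σ - ρ) ≤ (Gamma (1 - ρ))⁻¹ - (Gamma (1 - σ))⁻¹ := by
    simpa using eulerMascheroni_mul_sub_le_inv_Gamma_sub (sub_nonneg.2 hσ)
      (sub_le_sub_left hρσ.le 1) (by linarith)
  have hlead : t ^ (-ρ) * (π * (γ * (σ - ρ))) ≤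
      t ^ (-ρ) * (π * (Gamma (1 - ρ))⁻¹) - t ^ (-σ) * (π * (Gamma (1 - σ))⁻¹) :=
    calc _ ≤ t ^ (-ρ) * (π * ((Gamma (1 - ρ))⁻¹ - (Gamma (1 - σ))⁻¹)) := by gcongr
      _ ≤ _ := by
        have := mul_le_mul_of_nonneg_right hpow (mul_nonneg pi_pos.le hΓ0)
        linarith
  have hgap : D * t ^ (-ρ) * (σ - ρ) < t ^ (-ρ) * (π * (γ * (σ - ρ))) := by
    have := mul_lt_mul_of_pos_right hD (mul_pos (rpow_pos_of_pos ht0 (-ρ)) (sub_pos.2 hρσ))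
    linarith
  refine lt_of_mul_lt_mul_left (lt_of_mul_lt_mul_left ?_ hl.le) pi_pos.le
  rw [mul_pi_mul_mittagLeffler_eq hθ ⟨hρ, hρσ.le.trans hσ⟩ hl ht0,
    mul_pi_mul_mittagLeffler_eq hθ ⟨hρ.trans hρσ, hσ⟩ hl ht0]
  linarith

lemma exists_forall_strictAntiOn_mittagLeffler (hr : 0 < r) {l₀ : ℝ} (hl₀ : 0 < l₀) :
    ∃ T : ℝ, 0 < T ∧ ∀ t, T ≤ t → ∀ l, l₀ ≤ l →
      StrictAntiOn (fun ρ : ℝ => mittagLeffler ρ (-(l * t ^ ρ))) (Icc r 1) := by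
  have hθ : 3 * π / 4 ∈ Ioo (π / 2) π := by constructor <;> linarith [pi_pos]
  have hγ : 0 < γ := one_half_pos.trans one_half_lt_eulerMascheroniConstant
  obtain ⟨C, hC, hR⟩ := exists_mittagLefflerRemainderIntegral_sub_le hθ hr
  have hlim := (tendsto_one_add_log_mul_rpow_neg hr).const_mul (C / l₀)
  rw [mul_zero] at hlim
  obtain ⟨T, hT⟩ := eventually_atTop.1 (hlim.eventually_lt_const (mul_pos pi_pos hγ))
  refine ⟨max T 1, by positivity, fun t ht l hl ρ hρ σ hσ hρσ => ?_⟩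
  have ht1 : 1 ≤ t := (le_max_right T 1).trans ht
  have hl' : 0 < l := hl₀.trans_le hl
  refine mittagLeffler_lt_of_lt (hr.trans_le hρ.1) hρσ hσ.2 hl' ht1 hθ
    ((hR ρ σ l t hρ.1 hρσ.le hσ.2 hl' ht1).trans_eq ?_)
    ((?_ : C / l * ((1 + log t) * t ^ (-ρ)) ≤ _).trans_lt (hT t ((le_max_left T 1).trans ht)))
  · ring
  · have hlog := log_nonneg ht1
    have := hρ.1
    gcongr

end Monotonicity

lemma mittagLeffler_one (z : ℝ) : mittagLeffler 1 z = rexp z := by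
  rw [mittagLeffler, Real.exp_eq_exp_ℝ, NormedSpace.exp_eq_tsum_div]
  simp only [one_mul, Gamma_nat_eq_factorial]

/-- For `0 < ρ₀ < 1` and `λ₀ > 0` there is `T₀ = T₀(λ₀, ρ₀) > 0` such that for all
`t₀ ≥ T₀` and `λ ≥ λ₀` the function `e_λ(ρ) = E_ρ(−λ t₀^ρ)` is positive and strictly
decreasing in `ρ` on `[ρ₀, 1)`, and `e^{−λ t₀} < E_ρ(−λ t₀^ρ) ≤ E_{ρ₀}(−λ t₀^{ρ₀})`. -/
theorem stmt0 (ρ₀ lam₀ : ℝ) (hρ₀ : 0 < ρ₀) (hρ₀' : ρ₀ < 1) (hlam₀ : 0 < lam₀) :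
    ∃ T₀ : ℝ, 0 < T₀ ∧
      ∀ t₀ : ℝ, T₀ ≤ t₀ → ∀ lam : ℝ, lam₀ ≤ lam →
        (∀ ρ ∈ Set.Ico ρ₀ 1, 0 < mittagLeffler ρ (-(lam * t₀ ^ ρ))) ∧
        StrictAntiOn (fun ρ : ℝ => mittagLeffler ρ (-(lam * t₀ ^ ρ))) (Set.Ico ρ₀ 1) ∧
        ∀ ρ ∈ Set.Ico ρ₀ 1,
          Real.exp (-(lam * t₀)) < mittagLeffler ρ (-(lam * t₀ ^ ρ)) ∧
          mittagLeffler ρ (-(lam * t₀ ^ ρ)) ≤ mittagLeffler ρ₀ (-(lam * t₀ ^ ρ₀)) := by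
  obtain ⟨T, hT_pos, hT⟩ := exists_forall_strictAntiOn_mittagLeffler hρ₀ hlam₀
  refine ⟨T, hT_pos, fun t ht l hl => ?_⟩
  have hanti := hT t ht l hl
  have hexp_lt (ρ : ℝ) (hρ : ρ ∈ Ico ρ₀ 1) : rexp (-(l * t)) < mittagLeffler ρ (-(l * t ^ ρ)) := by
    simpa [mittagLeffler_one] using
      hanti (Ico_subset_Icc_self hρ) (right_mem_Icc.2 hρ₀'.le) hρ.2
  exact ⟨fun ρ hρ => (Real.exp_pos _).trans (hexp_lt ρ hρ), hanti.mono Ico_subset_Icc_self,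
    fun ρ hρ => ⟨hexp_lt ρ hρ,
      hanti.antitoneOn (left_mem_Icc.2 hρ₀'.le) (Ico_subset_Icc_self hρ) hρ.1⟩⟩
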